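/- arXiv:2010.11502 — 4 statements merged into one kernel-verified Lean document; each statement's English description precedes it below -/
import Mathlib

section
/- For each m ∈ ℕ let A_m^j ⊆ Lip_L⁰(ℝ^{d_j}) (j = 1,…,J) be nonempty sets and let B_m be a nonempty set of Borel maps ℝ^{K₀} → K, and define (P_L^m) := sup_{T ∈ B_m} inf_{(h_j)_j, h_j ∈ A_m^j} Φ(T,(h_j)_j). Assume: (H1) for every ε > 0 there is M ∈ ℕ such that for all m ≥ M, every j ∈ {1,…,J} and every h ∈ Lip_L⁰(ℝ^{d_j}) there exists h' ∈ A_m^j with sup_{y ∈ π_j(K)} |h(y) − h'(y)| ≤ ε; (H2) for every Borel map T : ℝ^{K₀} → K and every ε > 0 there is M ∈ ℕ such that for all m ≥ M there exists T' ∈ B_m with ∫ ‖T(y) − T'(y)‖ θ(dy) ≤ ε. Then (P_L^m) → (P_L) as m → ∞. -/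
/-!
Both inequalities rest on stability of the Lagrangian `Φ` in one argument, uniformly in the other.

* In the discriminators (`exists_lagrangian_discriminator_bound`): since `e_j` is bounded on `K`
  and both `T` and `μ` live on `K`, changing every `h_j` by at most `ε` on `π_j(K)` changes
  `Φ(T, h)` by at most `C ε`, with `C` independent of `T`. With (H1), every value `Φ(T, h)` is
  nearly undercut on the approximating class, so `limsup (P_L^m) ≤ (P_L)`.
* In the generator (`exists_lagrangian_generator_bound`): the functions `e_j · (h_j ∘ π_j)` are
  Lipschitz on `K` with a constant independent of `h`, while the continuous function `f` satisfies
  `|f x - f y| ≤ ε + C ‖x - y‖` on the compact set `K` (`exists_abs_sub_le_add_mul`). Hence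
  `|Φ(T, h) - Φ(T', h)| ≤ ε + C ∫ ‖T - T'‖ dθ` for all centered `L`-Lipschitz `h`. With (H2), a
  near-optimal `T` is replaced by an element of `B_m`, so `liminf (P_L^m) ≥ (P_L)`.

The two bounds are combined through the order characterization of convergence in `EReal`, which
makes a separate proof that `(P_L)` is finite unnecessary.
-/

open MeasureTheory Filter

noncomputable section

/-- The Lagrangian objective
`Φ(T, (h_j)_j) = ∫ f∘T dθ + Σ_j (∫ e_j(T)·h_j(π_j(T)) dθ - ∫ e_j·(h_j∘π_j) dμ)`. -/
def lagrangian {d K₀ J : ℕ} {dj : Fin J → ℕ}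
    (θ : Measure (EuclideanSpace ℝ (Fin K₀)))
    (μ : Measure (EuclideanSpace ℝ (Fin d)))
    (f : EuclideanSpace ℝ (Fin d) → ℝ)
    (e : Fin J → EuclideanSpace ℝ (Fin d) → ℝ)
    (π : (j : Fin J) → EuclideanSpace ℝ (Fin d) → EuclideanSpace ℝ (Fin (dj j)))
    (T : EuclideanSpace ℝ (Fin K₀) → EuclideanSpace ℝ (Fin d))
    (h : (j : Fin J) → EuclideanSpace ℝ (Fin (dj j)) → ℝ) : ℝ :=
  (∫ y, f (T y) ∂θ) +
    ∑ j, ((∫ y, e j (T y) * h j (π j (T y)) ∂θ) - ∫ x, e j x * h j (π j x) ∂μ)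

/-- A continuous function on a compact set is Lipschitz up to an arbitrarily small additive error:
nearby points are handled by uniform continuity, distant ones by boundedness. -/
lemma exists_abs_sub_le_add_mul {E : Type*} [NormedAddCommGroup E] {K : Set E}
    (hK : IsCompact K) {f : E → ℝ} (hf : Continuous f) {ε : ℝ} (hε : 0 < ε) :
    ∃ C : ℝ, 0 ≤ C ∧ ∀ x ∈ K, ∀ y ∈ K, |f x - f y| ≤ ε + C * ‖x - y‖ := by
  have huc := hK.uniformContinuousOn_of_continuous hf.continuousOn
  obtain ⟨δ, hδ, hδf⟩ := Metric.uniformContinuousOn_iff.1 huc ε hε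
  obtain ⟨M, hM⟩ := hK.exists_bound_of_continuousOn hf.continuousOn
  refine ⟨2 * |M| / δ, by positivity, fun x hx y hy => ?_⟩
  rcases lt_or_ge (dist x y) δ with h | h
  · have h1 := hδf x hx y hy h
    rw [Real.dist_eq] at h1
    have : 0 ≤ 2 * |M| / δ * ‖x - y‖ := by positivity
    linarith
  · rw [dist_eq_norm] at h
    have h1 : 2 * |M| ≤ 2 * |M| / δ * ‖x - y‖ := by
      rw [div_mul_eq_mul_div, le_div_iff₀ hδ]
      gcongr
    have h2 : |f x| ≤ |M| := (hM x hx).trans (le_abs_self M)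
    have h3 : |f y| ≤ |M| := (hM y hy).trans (le_abs_self M)
    have h4 := abs_sub (f x) (f y)
    linarith

lemma integrable_comp_of_mem_compact {Ω E : Type*} [MeasurableSpace Ω] [NormedAddCommGroup E]
    [MeasurableSpace E] [BorelSpace E] {ν : Measure Ω} [IsFiniteMeasure ν]
    {K : Set E} (hK : IsCompact K) {g : E → ℝ} (hg : Continuous g) {T : Ω → E}
    (hT : Measurable T) (hTK : ∀ᵐ y ∂ν, T y ∈ K) : Integrable (fun y => g (T y)) ν := by
  obtain ⟨M, hM⟩ := hK.exists_bound_of_continuousOn hg.continuousOn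
  refine Integrable.of_bound (hg.measurable.comp hT).aestronglyMeasurable M ?_
  filter_upwards [hTK] with y hy using hM _ hy

/-- Stability of an integral under a perturbation of the integrand that is small on `K`. -/
lemma abs_integral_comp_sub_le {Ω E : Type*} [MeasurableSpace Ω] [NormedAddCommGroup E]
    [MeasurableSpace E] [BorelSpace E] {ν : Measure Ω} [IsProbabilityMeasure ν]
    {K : Set E} (hK : IsCompact K) {g g' : E → ℝ} (hg : Continuous g) (hg' : Continuous g')
    {T : Ω → E} (hT : Measurable T) (hTK : ∀ᵐ y ∂ν, T y ∈ K) {c : ℝ}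
    (hc : ∀ x ∈ K, |g x - g' x| ≤ c) :
    |(∫ y, g (T y) ∂ν) - ∫ y, g' (T y) ∂ν| ≤ c := by
  rw [← integral_sub (integrable_comp_of_mem_compact hK hg hT hTK)
    (integrable_comp_of_mem_compact hK hg' hT hTK), ← Real.norm_eq_abs]
  have := norm_integral_le_of_norm_le_const (μ := ν) (C := c)
    (f := fun y => g (T y) - g' (T y)) (by filter_upwards [hTK] with y hy using hc _ hy)
  simpa using this

/-- Stability of an integral in the map `T`, for an integrand that is Lipschitz on `K` up to an
additive error. -/
lemma abs_integral_comp_sub_comp_le {Ω E : Type*} [MeasurableSpace Ω] [NormedAddCommGroup E]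
    [SecondCountableTopology E] [MeasurableSpace E] [BorelSpace E]
    {ν : Measure Ω} [IsProbabilityMeasure ν] {K : Set E} (hK : IsCompact K) {g : E → ℝ}
    (hg : Continuous g) {T T' : Ω → E} (hT : Measurable T) (hT' : Measurable T')
    (hTK : ∀ y, T y ∈ K) (hTK' : ∀ y, T' y ∈ K) {c C : ℝ}
    (hc : ∀ x ∈ K, ∀ y ∈ K, |g x - g y| ≤ c + C * ‖x - y‖) :
    |(∫ y, g (T y) ∂ν) - ∫ y, g (T' y) ∂ν| ≤ c + C * ∫ y, ‖T y - T' y‖ ∂ν := by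
  obtain ⟨R, hR⟩ := hK.exists_bound_of_continuousOn continuousOn_id
  have hint : Integrable (fun y => ‖T y - T' y‖) ν := by
    refine Integrable.of_bound (hT.sub hT').norm.aestronglyMeasurable (R + R)
      (ae_of_all _ fun y => ?_)
    rw [norm_norm]
    exact (norm_sub_le _ _).trans (add_le_add (hR _ (hTK y)) (hR _ (hTK' y)))
  rw [← integral_sub (integrable_comp_of_mem_compact hK hg hT (ae_of_all _ hTK))
    (integrable_comp_of_mem_compact hK hg hT' (ae_of_all _ hTK')), ← Real.norm_eq_abs]
  calc ‖∫ y, (g (T y) - g (T' y)) ∂ν‖ ≤ ∫ y, (c + C * ‖T y - T' y‖) ∂ν :=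
        norm_integral_le_of_norm_le ((integrable_const c).add (hint.const_mul C))
          (ae_of_all _ fun y => hc _ (hTK y) _ (hTK' y))
    _ = c + C * ∫ y, ‖T y - T' y‖ ∂ν := by
        rw [integral_add (integrable_const c) (hint.const_mul C), integral_const_mul]
        simp

/-- On a compact set the products `e · (h ∘ π)` are Lipschitz with a constant that does not depend
on the centered `L`-Lipschitz function `h`. The centering bounds `h` on `π(K)`. -/
lemma exists_mul_comp_lipschitz_bound {E F : Type*} [NormedAddCommGroup E] [NormedAddCommGroup F]
    {K : Set E} (hK : IsCompact K) {e : E → ℝ} {p : E → F} {Le Lp : NNReal}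
    (he : LipschitzWith Le e) (hp : LipschitzWith Lp p) (L : NNReal) :
    ∃ C : ℝ, 0 ≤ C ∧ ∀ h : F → ℝ, LipschitzWith L h → h 0 = 0 →
      ∀ x ∈ K, ∀ y ∈ K, |e x * h (p x) - e y * h (p y)| ≤ C * ‖x - y‖ := by
  obtain ⟨M, hM⟩ := hK.exists_bound_of_continuousOn he.continuous.continuousOn
  obtain ⟨R, hR⟩ := hK.exists_bound_of_continuousOn hp.continuous.continuousOn
  refine ⟨|M| * (L * Lp) + Le * (L * |R|), by positivity, fun h hh h0 x hx y hy => ?_⟩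
  have h1 : |e x| ≤ |M| := (hM x hx).trans (le_abs_self M)
  have h2 : |h (p y)| ≤ L * |R| := by
    have h3 := hh.dist_le_mul (p y) 0
    rw [h0, Real.dist_eq, sub_zero, dist_zero_right] at h3
    exact h3.trans (by gcongr; exact (hR y hy).trans (le_abs_self R))
  have h4 : |e x - e y| ≤ Le * ‖x - y‖ := by
    have := he.dist_le_mul x y
    rwa [Real.dist_eq, dist_eq_norm] at this
  have h5 : |h (p x) - h (p y)| ≤ L * Lp * ‖x - y‖ := by
    have := (hh.comp hp).dist_le_mul x y
    rw [Real.dist_eq, dist_eq_norm] at this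
    simpa using this
  calc |e x * h (p x) - e y * h (p y)|
      = |e x * (h (p x) - h (p y)) + (e x - e y) * h (p y)| := by congr 1; ring
    _ ≤ |e x| * |h (p x) - h (p y)| + |e x - e y| * |h (p y)| := by
        rw [← abs_mul, ← abs_mul]; exact abs_add_le _ _
    _ ≤ |M| * (L * Lp * ‖x - y‖) + Le * ‖x - y‖ * (L * |R|) := by gcongr
    _ = _ := by ring

section Lagrangian

variable {d K₀ J : ℕ} {dj : Fin J → ℕ} {K : Set (EuclideanSpace ℝ (Fin d))}
  {f : EuclideanSpace ℝ (Fin d) → ℝ} {e : Fin J → EuclideanSpace ℝ (Fin d) → ℝ}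
  {π : (j : Fin J) → EuclideanSpace ℝ (Fin d) → EuclideanSpace ℝ (Fin (dj j))}

/-- The Lagrangian is stable under perturbations of the discriminators that are uniformly small on
`π_j(K)`, uniformly in the generator. -/
lemma exists_lagrangian_discriminator_bound (hK : IsCompact K)
    (θ : Measure (EuclideanSpace ℝ (Fin K₀))) [IsProbabilityMeasure θ]
    (μ : Measure (EuclideanSpace ℝ (Fin d))) [IsProbabilityMeasure μ] (hμK : μ Kᶜ = 0)
    (f : EuclideanSpace ℝ (Fin d) → ℝ)
    (he : ∀ j, Continuous (e j)) (hπ : ∀ j, Continuous (π j)) :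
    ∃ C : ℝ, 0 ≤ C ∧ ∀ T : EuclideanSpace ℝ (Fin K₀) → EuclideanSpace ℝ (Fin d),
      Measurable T → (∀ y, T y ∈ K) →
      ∀ h h' : (j : Fin J) → EuclideanSpace ℝ (Fin (dj j)) → ℝ,
        (∀ j, Continuous (h j)) → (∀ j, Continuous (h' j)) →
        ∀ ε : ℝ, 0 ≤ ε → (∀ j, ∀ y ∈ π j '' K, |h j y - h' j y| ≤ ε) →
        lagrangian θ μ f e π T h' ≤ lagrangian θ μ f e π T h + C * ε := by
  choose M hM using fun j => hK.exists_bound_of_continuousOn (he j).continuousOn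
  refine ⟨∑ j, 2 * |M j|, by positivity, fun T hT hTK h h' hh hh' ε hε hhε => ?_⟩
  unfold lagrangian
  rw [Finset.sum_mul, add_assoc, ← Finset.sum_add_distrib]
  gcongr with j _
  have hg : Continuous fun x => e j x * h j (π j x) := (he j).mul ((hh j).comp (hπ j))
  have hg' : Continuous fun x => e j x * h' j (π j x) := (he j).mul ((hh' j).comp (hπ j))
  have hc : ∀ x ∈ K, |e j x * h j (π j x) - e j x * h' j (π j x)| ≤ |M j| * ε := by
    intro x hx
    rw [← mul_sub, abs_mul]
    exact mul_le_mul ((hM j x hx).trans (le_abs_self _)) (hhε j _ ⟨x, hx, rfl⟩)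
      (abs_nonneg _) (abs_nonneg _)
  have h1 := abs_le.1 (abs_integral_comp_sub_le (ν := θ) hK hg hg' hT (ae_of_all _ hTK) hc)
  have h2 := abs_le.1 (abs_integral_comp_sub_le (ν := μ) hK hg hg' measurable_id
    (mem_ae_iff.2 hμK) hc)
  simp only [id] at h2
  linarith [h1.1, h2.2]

/-- Up to an additive error `ε`, the Lagrangian is Lipschitz in the generator for the `L¹(θ)`
distance, uniformly over centered `L`-Lipschitz discriminators. -/
lemma exists_lagrangian_generator_bound (hK : IsCompact K)
    (θ : Measure (EuclideanSpace ℝ (Fin K₀))) [IsProbabilityMeasure θ]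
    (μ : Measure (EuclideanSpace ℝ (Fin d)))
    (hf : Continuous f) {Le Lπ : Fin J → NNReal}
    (he : ∀ j, LipschitzWith (Le j) (e j)) (hπ : ∀ j, LipschitzWith (Lπ j) (π j)) (L : NNReal)
    {ε : ℝ} (hε : 0 < ε) :
    ∃ C : ℝ, 0 ≤ C ∧ ∀ T T' : EuclideanSpace ℝ (Fin K₀) → EuclideanSpace ℝ (Fin d),
      Measurable T → Measurable T' → (∀ y, T y ∈ K) → (∀ y, T' y ∈ K) →
      ∀ h : (j : Fin J) → EuclideanSpace ℝ (Fin (dj j)) → ℝ,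
        (∀ j, LipschitzWith L (h j) ∧ h j 0 = 0) →
        lagrangian θ μ f e π T h ≤
          lagrangian θ μ f e π T' h + (ε + C * ∫ y, ‖T y - T' y‖ ∂θ) := by
  obtain ⟨Cf, hCf, hCf'⟩ := exists_abs_sub_le_add_mul hK hf hε
  choose C hC hC' using fun j => exists_mul_comp_lipschitz_bound hK (he j) (hπ j) L
  refine ⟨Cf + ∑ j, C j, add_nonneg hCf (Finset.sum_nonneg fun j _ => hC j),
    fun T T' hT hT' hTK hTK' h hh => ?_⟩
  have h1 := (abs_le.1 (abs_integral_comp_sub_comp_le (ν := θ) hK hf hT hT' hTK hTK' hCf')).2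
  have h2 : ∑ j, ((∫ y, e j (T y) * h j (π j (T y)) ∂θ) - ∫ x, e j x * h j (π j x) ∂μ) ≤
      ∑ j, ((∫ y, e j (T' y) * h j (π j (T' y)) ∂θ) - ∫ x, e j x * h j (π j x) ∂μ) +
        (∑ j, C j) * ∫ y, ‖T y - T' y‖ ∂θ := by
    rw [Finset.sum_mul, ← Finset.sum_add_distrib]
    refine Finset.sum_le_sum fun j _ => ?_
    have hg : Continuous fun x => e j x * h j (π j x) :=
      (he j).continuous.mul ((hh j).1.continuous.comp (hπ j).continuous)
    have h3 := (abs_le.1 (abs_integral_comp_sub_comp_le (ν := θ) (c := 0) (C := C j) hK hg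
      hT hT' hTK hTK' (fun x hx y hy => by
        rw [zero_add]; exact hC' j (h j) (hh j).1 (hh j).2 x hx y hy))).2
    linarith
  unfold lagrangian
  linarith

end Lagrangian

/-- Theorem 3.1(i) of the paper, with the neural-network classes replaced by arbitrary
classes `A_m^j` of centered `L`-Lipschitz functions and classes `B_m` of Borel maps with
range in `K`, having the approximation properties (H1) and (H2): `(P_L^m) → (P_L)`. -/
theorem PLm_tendsto_PL
    (d K₀ J : ℕ) (dj : Fin J → ℕ)
    (K : Set (EuclideanSpace ℝ (Fin d))) (hKne : K.Nonempty) (hKcomp : IsCompact K)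
    (θ : Measure (EuclideanSpace ℝ (Fin K₀))) [IsProbabilityMeasure θ]
    (μ : Measure (EuclideanSpace ℝ (Fin d))) [IsProbabilityMeasure μ] (hμK : μ Kᶜ = 0)
    (f : EuclideanSpace ℝ (Fin d) → ℝ) (hf : Continuous f)
    (e : Fin J → EuclideanSpace ℝ (Fin d) → ℝ)
    (π : (j : Fin J) → EuclideanSpace ℝ (Fin d) → EuclideanSpace ℝ (Fin (dj j)))
    (Le Lπ : Fin J → NNReal)
    (he : ∀ j, LipschitzWith (Le j) (e j)) (hπ : ∀ j, LipschitzWith (Lπ j) (π j))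
    (L : ℝ) (hL : 0 < L)
    -- the approximating classes of centered L-Lipschitz discriminator functions
    (A : ℕ → (j : Fin J) → Set (EuclideanSpace ℝ (Fin (dj j)) → ℝ))
    (hA_ne : ∀ m j, (A m j).Nonempty)
    (hA_lip : ∀ m j, ∀ h ∈ A m j, LipschitzWith (Real.toNNReal L) h ∧ h 0 = 0)
    -- the approximating classes of Borel generator maps with range in K
    (B : ℕ → Set (EuclideanSpace ℝ (Fin K₀) → EuclideanSpace ℝ (Fin d)))
    (hB_ne : ∀ m, (B m).Nonempty)
    (hB_mem : ∀ m, ∀ T ∈ B m, Measurable T ∧ ∀ y, T y ∈ K)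
    -- (H1): uniform approximation of centered L-Lipschitz functions on π_j(K)
    (H1 : ∀ ε > (0 : ℝ), ∃ M : ℕ, ∀ m ≥ M, ∀ j : Fin J,
      ∀ h : EuclideanSpace ℝ (Fin (dj j)) → ℝ,
        LipschitzWith (Real.toNNReal L) h → h 0 = 0 →
        ∃ h' ∈ A m j, ∀ y ∈ π j '' K, |h y - h' y| ≤ ε)
    -- (H2): L¹(θ)-approximation of Borel maps with range in K
    (H2 : ∀ T : EuclideanSpace ℝ (Fin K₀) → EuclideanSpace ℝ (Fin d),
      Measurable T → (∀ y, T y ∈ K) → ∀ ε > (0 : ℝ), ∃ M : ℕ, ∀ m ≥ M,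
        ∃ T' ∈ B m, ∫ y, ‖T y - T' y‖ ∂θ ≤ ε) :
    Tendsto
      (fun m : ℕ =>
        ⨆ T : (B m),
          ⨅ h : {h : (j : Fin J) → EuclideanSpace ℝ (Fin (dj j)) → ℝ //
              ∀ j, h j ∈ A m j},
            ((lagrangian θ μ f e π T.1 h.1 : ℝ) : EReal))
      atTop
      (nhds
        (⨆ T : {T : EuclideanSpace ℝ (Fin K₀) → EuclideanSpace ℝ (Fin d) //
            Measurable T ∧ ∀ y, T y ∈ K},
          ⨅ h : {h : (j : Fin J) → EuclideanSpace ℝ (Fin (dj j)) → ℝ //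
              ∀ j, LipschitzWith (Real.toNNReal L) (h j) ∧ h j 0 = 0},
            ((lagrangian θ μ f e π T.1 h.1 : ℝ) : EReal))) := by
  rw [tendsto_order]
  constructor
  · -- lower bound: a generator `T` that beats `a` is replaced by a nearby element of `B m`
    intro a ha
    obtain ⟨T, hTa⟩ := lt_iSup_iff.1 ha
    obtain ⟨r, har, hr⟩ := EReal.lt_iff_exists_real_btwn.1 hTa
    obtain ⟨s, has, hsr⟩ := EReal.lt_iff_exists_real_btwn.1 har
    have hsr' : s < r := EReal.coe_lt_coe_iff.1 hsr
    obtain ⟨C, hC, hbound⟩ := exists_lagrangian_generator_bound hKcomp θ μ hf he hπ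
      (Real.toNNReal L) (half_pos (sub_pos.2 hsr'))
    have hη : 0 < (r - s) / 2 / (C + 1) := by
      have := sub_pos.2 hsr'
      positivity
    obtain ⟨M, hM⟩ := H2 T.1 T.2.1 T.2.2 _ hη
    filter_upwards [eventually_ge_atTop M] with m hm
    obtain ⟨T', hT'B, hT'⟩ := hM m hm
    refine has.trans_le (le_trans ?_ (le_iSup _ (⟨T', hT'B⟩ : B m)))
    refine le_iInf fun h => EReal.coe_le_coe_iff.2 ?_
    have hlip : ∀ j, LipschitzWith (Real.toNNReal L) (h.1 j) ∧ h.1 j 0 = 0 :=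
      fun j => hA_lip m j _ (h.2 j)
    have h1 := hbound T.1 T' T.2.1 (hB_mem m T' hT'B).1 T.2.2 (hB_mem m T' hT'B).2 h.1 hlip
    have h2 : r ≤ lagrangian θ μ f e π T.1 h.1 :=
      EReal.coe_le_coe_iff.1 (le_iInf_iff.1 hr.le ⟨h.1, hlip⟩)
    have h3 : C * ∫ y, ‖T.1 y - T' y‖ ∂θ ≤ (r - s) / 2 := by
      rw [le_div_iff₀ (by positivity)] at hT'
      have : 0 ≤ ∫ y, ‖T.1 y - T' y‖ ∂θ := integral_nonneg fun y => norm_nonneg _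
      linarith
    change s ≤ lagrangian θ μ f e π T' h.1
    linarith
  · -- upper bound: near-optimal discriminators are replaced by elements of the classes `A m j`
    intro a ha
    obtain ⟨s, hs, hsa⟩ := EReal.lt_iff_exists_real_btwn.1 ha
    obtain ⟨r, hr, hrs⟩ := EReal.lt_iff_exists_real_btwn.1 hs
    have hrs' : r < s := EReal.coe_lt_coe_iff.1 hrs
    obtain ⟨C, hC, hbound⟩ := exists_lagrangian_discriminator_bound hKcomp θ μ hμK f
      (fun j => (he j).continuous) (fun j => (hπ j).continuous)
    have hη : 0 < (s - r) / (C + 1) := by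
      have := sub_pos.2 hrs'
      positivity
    obtain ⟨M, hM⟩ := H1 _ hη
    filter_upwards [eventually_ge_atTop M] with m hm
    refine lt_of_le_of_lt (iSup_le fun T => ?_) hsa
    obtain ⟨hTm, hTK⟩ := hB_mem m T.1 T.2
    obtain ⟨h, hh⟩ := iInf_lt_iff.1 ((le_iSup (fun T : {T : EuclideanSpace ℝ (Fin K₀) →
        EuclideanSpace ℝ (Fin d) // Measurable T ∧ ∀ y, T y ∈ K} =>
      ⨅ h : {h : (j : Fin J) → EuclideanSpace ℝ (Fin (dj j)) → ℝ //
        ∀ j, LipschitzWith (Real.toNNReal L) (h j) ∧ h j 0 = 0},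
        ((lagrangian θ μ f e π T.1 h.1 : ℝ) : EReal)) ⟨T.1, hTm, hTK⟩).trans_lt hr)
    choose h' hh'A hh' using fun j => hM m hm j (h.1 j) (h.2 j).1 (h.2 j).2
    refine (iInf_le _ ⟨h', hh'A⟩).trans (EReal.coe_le_coe_iff.2 ?_)
    have h1 := hbound T.1 hTm hTK h.1 h' (fun j => (h.2 j).1.continuous)
      (fun j => (hA_lip m j _ (hh'A j)).1.continuous) _ hη.le hh'
    have h2 : lagrangian θ μ f e π T.1 h.1 < r := EReal.coe_lt_coe_iff.1 hh
    have h3 : C * ((s - r) / (C + 1)) ≤ s - r := by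
      have : (C + 1) * ((s - r) / (C + 1)) = s - r := mul_div_cancel₀ _ (by positivity)
      linarith
    change lagrangian θ μ f e π T.1 h' ≤ s
    linarith

end
end

section
/- Let κ := ( ∫₀¹ x·|sin(1/x)| dx )^{−1} and let μ₁ be the Borel probability measure on ℝ with Lebesgue density x ↦ 1_{(0,1)}(x)·κ·x·|sin(1/x)|. Let μ be any Borel probability measure on ℝ² whose first marginal is μ₁, and let T = (T₁, T₂) : (0,1) → ℝ² be Borel measurable such that T₁ is piecewise affine with finitely many pieces, i.e., there exist 0 = t₀ < t₁ < ⋯ < t_n = 1 such that T₁ is affine on each interval (t_{i−1}, t_i). Then inf over (a,b) ∈ ℝ² of [ ∫₀¹ a·(T₁(u) − b)⁺ du − ∫ a·(x₁ − b)⁺ μ(d(x₁,x₂)) ] = −∞. -/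
/-!
Scaling `a` shows that the infimum is `-∞` as soon as the difference of the two integrals of
`x ↦ (x - b)⁺` is nonzero for one `b`. Suppose it vanishes for every `b`.

* On the generator side, `b ↦ ∫₀¹ (T₁(u) - b)⁺ du` is a finite sum of integrals over affine pieces,
  and for small `b > 0` each of them is a quadratic polynomial in `b` (`EvQuad`,
  `evQuad_generator`).
* On the side of `mu1`, for `b ∈ (0,1)` the integral is `∫_b^1 (x - b) f(x) dx` with the continuous
  density `f(x) = κ x |sin (1/x)|` (`integral_relu_mu1`), so its second derivative at `b` is `f b`.

Hence `f` would be constant on some interval `(0, ε)`. But `κ ≠ 0`, and `f` has both zeros (at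
`1/(kπ)`) and nonzero values (at `1/(kπ + π/2)`) arbitrarily close to `0`.
-/

open MeasureTheory

/-- The normalizing constant `κ = (∫₀¹ x |sin(1/x)| dx)⁻¹`. -/
noncomputable def kappa : ℝ := (∫ x in Set.Ioo (0 : ℝ) 1, x * |Real.sin (1 / x)|)⁻¹

/-- The Borel probability measure on ℝ with Lebesgue density
`x ↦ 1_{(0,1)}(x) κ x |sin(1/x)|`. -/
noncomputable def mu1 : Measure ℝ :=
  volume.withDensity fun x =>
    ENNReal.ofReal (Set.indicator (Set.Ioo (0 : ℝ) 1)
      (fun x => kappa * x * |Real.sin (1 / x)|) x)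

/-- `T : (0,1) → ℝ` is piecewise affine with finitely many pieces: there is a partition
`0 = t₀ < t₁ < ⋯ < t_n = 1` such that `T` is affine on each open interval. -/
def PiecewiseAffineOn01 (T : ℝ → ℝ) : Prop :=
  ∃ (n : ℕ) (t : ℕ → ℝ), 0 < n ∧ t 0 = 0 ∧ t n = 1 ∧ (∀ i < n, t i < t (i + 1)) ∧
    ∀ i < n, ∃ a b : ℝ, ∀ u ∈ Set.Ioo (t i) (t (i + 1)), T u = a * u + b

open Filter Topology

/-- `F` agrees with a polynomial of degree at most two on some interval `(0, ε)`. -/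
def EvQuad (F : ℝ → ℝ) : Prop :=
  ∃ A B C : ℝ, ∀ᶠ b in 𝓝[>] (0 : ℝ), F b = A + B * b + C * b ^ 2

lemma EvQuad.add {F G : ℝ → ℝ} (hF : EvQuad F) (hG : EvQuad G) :
    EvQuad (fun b => F b + G b) := by
  obtain ⟨A, B, C, h⟩ := hF
  obtain ⟨A₂, B₂, C₂, h₂⟩ := hG
  refine ⟨A + A₂, B + B₂, C + C₂, ?_⟩
  filter_upwards [h, h₂] with b h1 h2
  rw [h1, h2]; ring

lemma EvQuad.const_mul {F : ℝ → ℝ} (hF : EvQuad F) (c : ℝ) :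
    EvQuad (fun b => c * F b) := by
  obtain ⟨A, B, C, h⟩ := hF
  refine ⟨c * A, c * B, c * C, ?_⟩
  filter_upwards [h] with b h1
  rw [h1]; ring

/-- As `b ↓ 0`, the sign of `c - b` is eventually constant. -/
lemma eventually_sign (c : ℝ) :
    (∀ᶠ b in 𝓝[>] (0 : ℝ), 0 ≤ c - b) ∨ (∀ᶠ b in 𝓝[>] (0 : ℝ), c - b ≤ 0) := by
  rcases lt_or_ge 0 c with hc | hc
  · left
    filter_upwards [Ioo_mem_nhdsGT hc] with b hb
    linarith [hb.2]
  · right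
    filter_upwards [self_mem_nhdsWithin] with b hb
    have : 0 < b := hb
    linarith

lemma evQuad_max (c : ℝ) : EvQuad (fun b => max (c - b) 0) := by
  rcases eventually_sign c with h | h
  · refine ⟨c, -1, 0, ?_⟩
    filter_upwards [h] with b hb
    rw [max_eq_left hb]; ring
  · refine ⟨0, 0, 0, ?_⟩
    filter_upwards [h] with b hb
    rw [max_eq_right hb]; ring

lemma integral_max_of_nonneg {y : ℝ} (hy : 0 ≤ y) :
    ∫ x in (0 : ℝ)..y, max x 0 = y ^ 2 / 2 := by
  have : ∫ x in (0 : ℝ)..y, max x 0 = ∫ x in (0 : ℝ)..y, x := by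
    apply intervalIntegral.integral_congr
    intro x hx
    rw [Set.uIcc_of_le hy] at hx
    exact max_eq_left hx.1
  rw [this, integral_id]; ring

lemma integral_max_of_nonpos {y : ℝ} (hy : y ≤ 0) :
    ∫ x in (0 : ℝ)..y, max x 0 = 0 := by
  have : ∫ x in (0 : ℝ)..y, max x 0 = ∫ x in (0 : ℝ)..y, (0 : ℝ) := by
    apply intervalIntegral.integral_congr
    intro x hx
    rw [Set.uIcc_of_ge hy] at hx
    exact max_eq_right hx.2
  rw [this]; simp

lemma evQuad_primitive (c : ℝ) : EvQuad (fun b => ∫ x in (0 : ℝ)..(c - b), max x 0) := by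
  rcases eventually_sign c with h | h
  · refine ⟨c ^ 2 / 2, -c, 1 / 2, ?_⟩
    filter_upwards [h] with b hb
    rw [integral_max_of_nonneg hb]; ring
  · refine ⟨0, 0, 0, ?_⟩
    filter_upwards [h] with b hb
    rw [integral_max_of_nonpos hb]; ring

lemma evQuad_affine_piece (α β s t : ℝ) :
    EvQuad (fun b => ∫ u in s..t, max (α * u + β - b) 0) := by
  by_cases hα : α = 0
  · subst hα
    have := (evQuad_max β).const_mul (t - s)
    simpa using this
  · have h := ((evQuad_primitive (α * t + β)).add
      ((evQuad_primitive (α * s + β)).const_mul (-1))).const_mul α⁻¹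
    convert h using 2 with b
    have hint : ∀ x y : ℝ, IntervalIntegrable (fun x : ℝ => max x 0) volume x y := fun x y =>
      (by fun_prop : Continuous fun x : ℝ => max x 0).intervalIntegrable x y
    have h1 := intervalIntegral.integral_comp_mul_add (a := s) (b := t)
      (fun x : ℝ => max x 0) hα (β - b)
    simp only [← add_sub_assoc, smul_eq_mul] at h1
    rw [h1, ← intervalIntegral.integral_interval_sub_left (hint 0 _) (hint 0 _)]
    ring

lemma evQuad_sum {F : ℕ → ℝ → ℝ} (n : ℕ) (h : ∀ i < n, EvQuad (F i)) :
    EvQuad (fun b => ∑ i ∈ Finset.range n, F i b) := by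
  induction n with
  | zero => exact ⟨0, 0, 0, by simp⟩
  | succ n ih =>
    simp only [Finset.sum_range_succ]
    exact (ih fun i hi => h i (by omega)).add (h n (by omega))

lemma evQuad_generator {S : ℝ → ℝ} (hS : PiecewiseAffineOn01 S) :
    EvQuad (fun b => ∫ u in Set.Ioo (0 : ℝ) 1, max (S u - b) 0) := by
  obtain ⟨n, t, -, h0, h1, hlt, haff⟩ := hS
  have hcongr : ∀ i < n, ∃ α β : ℝ, ∀ b, (fun u => max (α * u + β - b) 0)
      =ᵐ[volume.restrict (Set.uIoc (t i) (t (i + 1)))] fun u => max (S u - b) 0 := by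
    intro i hi
    obtain ⟨α, β, h⟩ := haff i hi
    refine ⟨α, β, fun b => ?_⟩
    rw [Set.uIoc_of_le (hlt i hi).le, ← Measure.restrict_congr_set Ioo_ae_eq_Ioc]
    filter_upwards [ae_restrict_mem measurableSet_Ioo] with u hu
    rw [h u hu]
  have hint : ∀ b, ∀ i < n,
      IntervalIntegrable (fun u => max (S u - b) 0) volume (t i) (t (i + 1)) := by
    intro b i hi
    obtain ⟨α, β, h⟩ := hcongr i hi
    exact ((by fun_prop : Continuous fun u : ℝ => max (α * u + β - b) 0).intervalIntegrable
      _ _).congr_ae (h b)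
  have hsum := evQuad_sum (F := fun i b => ∫ u in t i..t (i + 1), max (S u - b) 0) n (by
    intro i hi
    obtain ⟨α, β, h⟩ := hcongr i hi
    convert evQuad_affine_piece α β (t i) (t (i + 1)) using 2 with b
    exact (intervalIntegral.integral_congr_ae_restrict (h b)).symm)
  convert hsum using 2 with b
  rw [intervalIntegral.sum_integral_adjacent_intervals (hint b), h0, h1,
    intervalIntegral.integral_of_le zero_le_one, integral_Ioc_eq_integral_Ioo]

/-- The density of `mu1`, without the indicator. The convention `1 / 0 = 0` makes it continuous
at `0` as well. -/
noncomputable def dens (x : ℝ) : ℝ := kappa * x * |Real.sin (1 / x)|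

lemma continuous_dens : Continuous dens := by
  rw [continuous_iff_continuousAt]
  intro x
  by_cases hx : x = 0
  · subst hx
    have h0 : dens 0 = 0 := by simp [dens]
    rw [ContinuousAt, h0]
    have hlim : Tendsto (fun x : ℝ => |kappa * x|) (𝓝 0) (𝓝 0) := by
      have : Continuous fun x : ℝ => |kappa * x| := by fun_prop
      simpa using this.tendsto 0
    refine squeeze_zero_norm (fun x => ?_) hlim
    rw [dens, Real.norm_eq_abs, abs_mul, abs_abs]
    exact mul_le_of_le_one_right (abs_nonneg _) (Real.abs_sin_le_one _)
  · unfold dens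
    have : ContinuousAt (fun x : ℝ => 1 / x) x := by
      simpa using continuousAt_inv₀ hx
    fun_prop

lemma kappa_nonneg : 0 ≤ kappa :=
  inv_nonneg.2 (setIntegral_nonneg measurableSet_Ioo fun _ hx =>
    mul_nonneg hx.1.le (abs_nonneg _))

lemma dens_nonneg {x : ℝ} (hx : 0 ≤ x) : 0 ≤ dens x :=
  mul_nonneg (mul_nonneg kappa_nonneg hx) (abs_nonneg _)

lemma integral_relu_mu1 {b : ℝ} (hb : b ∈ Set.Ioo (0 : ℝ) 1) :
    ∫ y, max (y - b) 0 ∂mu1 =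
      (∫ x in b..1, x * dens x) - b * ∫ x in b..1, dens x := by
  have hc := continuous_dens
  have hmeas : Measurable (Set.indicator (Set.Ioo (0 : ℝ) 1) dens) :=
    hc.measurable.indicator measurableSet_Ioo
  have hmu : mu1 = volume.withDensity fun x =>
    ENNReal.ofReal (Set.indicator (Set.Ioo (0 : ℝ) 1) dens x) := rfl
  rw [hmu, integral_withDensity_eq_integral_toReal_smul hmeas.ennreal_ofReal
    (Eventually.of_forall fun _ => ENNReal.ofReal_lt_top)]
  have hfun : (fun y => (ENNReal.ofReal (Set.indicator (Set.Ioo (0 : ℝ) 1) dens y)).toReal •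
      max (y - b) 0) = Set.indicator (Set.Ioo (0 : ℝ) 1) (fun y => dens y * max (y - b) 0) := by
    ext y
    by_cases hy : y ∈ Set.Ioo (0 : ℝ) 1
    · simp [hy, ENNReal.toReal_ofReal (dens_nonneg hy.1.le)]
    · simp [hy]
  rw [hfun, integral_indicator measurableSet_Ioo, ← integral_Ioc_eq_integral_Ioo,
    ← intervalIntegral.integral_of_le zero_le_one]
  have hI : ∀ x y : ℝ, IntervalIntegrable (fun y => dens y * max (y - b) 0) volume x y :=
    fun x y => (by fun_prop : Continuous fun y => dens y * max (y - b) 0).intervalIntegrable x y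
  rw [← intervalIntegral.integral_add_adjacent_intervals (hI 0 b) (hI b 1)]
  have h1 : ∫ y in (0 : ℝ)..b, dens y * max (y - b) 0 = ∫ y in (0 : ℝ)..b, (0 : ℝ) := by
    apply intervalIntegral.integral_congr
    intro y hy
    rw [Set.uIcc_of_le hb.1.le] at hy
    simp [hy.2]
  have h2 : ∫ y in b..1, dens y * max (y - b) 0 = ∫ y in b..1, (y * dens y - b * dens y) := by
    apply intervalIntegral.integral_congr
    intro y hy
    rw [Set.uIcc_of_le hb.2.le] at hy
    simp only [max_eq_left (sub_nonneg.2 hy.1)]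
    ring
  rw [h1, h2, intervalIntegral.integral_sub
    ((by fun_prop : Continuous fun y => y * dens y).intervalIntegrable _ _)
    ((by fun_prop : Continuous fun y => b * dens y).intervalIntegrable _ _),
    intervalIntegral.integral_const_mul]
  simp

lemma hasDerivAt_tail {g : ℝ → ℝ} (hg : Continuous g) (b : ℝ) :
    HasDerivAt (fun b => ∫ x in b..1, g x) (-g b) b :=
  intervalIntegral.integral_hasDerivAt_left (hg.intervalIntegrable _ _)
    (hg.stronglyMeasurableAtFilter _ _) hg.continuousAt

/-- The second derivative of `b ↦ ∫ (y - b)⁺ dmu1` is the density, so a quadratic behaviour of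
this function near `0` forces the density to be constant there. -/
lemma dens_const_of_evQuad (h : EvQuad (fun b => ∫ y, max (y - b) 0 ∂mu1)) :
    ∃ C : ℝ, ∀ᶠ b in 𝓝[>] (0 : ℝ), dens b = C := by
  obtain ⟨A, B, C, h⟩ := h
  refine ⟨2 * C, ?_⟩
  have hc := continuous_dens
  have h01 : ∀ᶠ b in 𝓝[>] (0 : ℝ), (∫ x in b..1, x * dens x) - b * ∫ x in b..1, dens x
      = A + B * b + C * b ^ 2 := by
    filter_upwards [h, Ioo_mem_nhdsGT (zero_lt_one (α := ℝ))] with b hb hb1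
    rw [← integral_relu_mu1 hb1, hb]
  obtain ⟨ε, hε, hsub⟩ := mem_nhdsGT_iff_exists_Ioo_subset.1 h01
  have hε : 0 < ε := hε
  have hfirst : ∀ b ∈ Set.Ioo 0 ε, -(∫ x in b..1, dens x) = B + 2 * C * b := by
    intro b hb
    have hd1 := (hasDerivAt_tail (by fun_prop : Continuous fun x => x * dens x) b).sub
      ((hasDerivAt_id b).mul (hasDerivAt_tail hc b))
    have hd2 : HasDerivAt (fun b : ℝ => A + B * b + C * b ^ 2) (B + 2 * C * b) b := by
      refine ((((hasDerivAt_id' b).const_mul B).const_add A).add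
        ((hasDerivAt_pow 2 b).const_mul C)).congr_deriv ?_
      push_cast
      ring
    have heq := hd2.congr_of_eventuallyEq (f₁ := fun b =>
      (∫ x in b..1, x * dens x) - b * ∫ x in b..1, dens x)
      (by filter_upwards [Ioo_mem_nhds hb.1 hb.2] with x hx using hsub hx)
    have := hd1.unique heq
    simp only [id] at this
    linarith
  filter_upwards [Ioo_mem_nhdsGT hε] with b hb
  have hd1 := (hasDerivAt_tail hc b).neg
  have hd2 : HasDerivAt (fun b : ℝ => B + 2 * C * b) (2 * C) b := by
    simpa using ((hasDerivAt_id b).const_mul (2 * C)).const_add B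
  have heq := hd2.congr_of_eventuallyEq (f₁ := fun b => -(∫ x in b..1, dens x))
    (by filter_upwards [Ioo_mem_nhds hb.1 hb.2] with x hx using hfirst x hx)
  have := hd1.unique heq
  linarith

lemma not_dens_const (hk : kappa ≠ 0) (C : ℝ) : ¬ ∀ᶠ b in 𝓝[>] (0 : ℝ), dens b = C := by
  intro h
  have hinv : ∀ᶠ y in atTop, dens y⁻¹ = C := tendsto_inv_atTop_nhdsGT_zero.eventually h
  obtain ⟨M, hM⟩ := eventually_atTop.1 hinv
  obtain ⟨k, hk1⟩ := exists_nat_gt (max M 1)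
  have hkM : M < k := (le_max_left _ _).trans_lt hk1
  have hk0 : (1 : ℝ) < k := (le_max_right _ _).trans_lt hk1
  have hkpi : (k : ℝ) ≤ k * Real.pi := by nlinarith [Real.pi_gt_three]
  have e1 := hM (k * Real.pi) (by linarith)
  have e2 := hM (k * Real.pi + Real.pi / 2) (by linarith [Real.pi_pos])
  have z1 : dens (k * Real.pi)⁻¹ = 0 := by
    simp only [dens, one_div, inv_inv, Real.sin_nat_mul_pi, abs_zero, mul_zero]
  rw [← e1, z1] at e2
  have hy : (k * Real.pi + Real.pi / 2 : ℝ) ≠ 0 := by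
    have := Real.pi_pos
    positivity
  have hs : |Real.sin (k * Real.pi + Real.pi / 2)| = 1 := by
    rw [Real.sin_add_pi_div_two]
    rw [Real.cos_nat_mul_pi, abs_pow, abs_neg, abs_one, one_pow]
  simp only [dens, one_div, inv_inv, hs, mul_one] at e2
  exact mul_ne_zero hk (inv_ne_zero hy) e2

/-- The counterexample of Remark 2.1(i) of the paper: if the generator's first component
is piecewise affine, the infimum over the ReLU penalization functions
`h(x₁,x₂) = a (x₁ - b)⁺` evaluates to `-∞`. -/
theorem inf_relu_penalization_eq_bot
    (μ : Measure (ℝ × ℝ)) [IsProbabilityMeasure μ] (hμ₁ : μ.map Prod.fst = mu1)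
    (T : ℝ → ℝ × ℝ) (hT_meas : Measurable T)
    (hT₁_pa : PiecewiseAffineOn01 (fun u => (T u).1)) :
    (⨅ p : ℝ × ℝ,
        (((∫ u in Set.Ioo (0 : ℝ) 1, p.1 * max ((T u).1 - p.2) 0) -
          ∫ x, p.1 * max (x.1 - p.2) 0 ∂μ : ℝ) : EReal)) = ⊥ := by
  have hk : kappa ≠ 0 := by
    intro hk
    have hzero : mu1 = 0 := by simp [mu1, hk]
    have : IsProbabilityMeasure mu1 :=
      hμ₁ ▸ Measure.isProbabilityMeasure_map measurable_fst.aemeasurable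
    exact IsProbabilityMeasure.ne_zero mu1 hzero
  have hmarg : ∀ b, ∫ x, max (x.1 - b) 0 ∂μ = ∫ y, max (y - b) 0 ∂mu1 := by
    intro b
    rw [← hμ₁, integral_map measurable_fst.aemeasurable
      (by fun_prop : Continuous fun y : ℝ => max (y - b) 0).aestronglyMeasurable]
  obtain ⟨b, hb⟩ : ∃ b, (∫ u in Set.Ioo (0 : ℝ) 1, max ((T u).1 - b) 0) -
      ∫ x, max (x.1 - b) 0 ∂μ ≠ 0 := by
    by_contra! hcon
    have hq := evQuad_generator hT₁_pa
    have heq : (fun b => ∫ u in Set.Ioo (0 : ℝ) 1, max ((T u).1 - b) 0) =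
        fun b => ∫ y, max (y - b) 0 ∂mu1 := by
      ext b
      rw [← hmarg, sub_eq_zero.1 (hcon b)]
    rw [heq] at hq
    obtain ⟨C, hC⟩ := dens_const_of_evQuad hq
    exact not_dens_const hk C hC
  rw [EReal.eq_bot_iff_forall_lt]
  intro y
  -- With `D` the nonzero difference at `b`, the slope `a = (y - 1) / D` gives the value `y - 1`.
  refine (iInf_le _ ((y - 1) / ((∫ u in Set.Ioo (0 : ℝ) 1, max ((T u).1 - b) 0) -
      ∫ x, max (x.1 - b) 0 ∂μ), b)).trans_lt ?_
  rw [EReal.coe_lt_coe_iff]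
  simp only [integral_const_mul]
  rw [← mul_sub, div_mul_cancel₀ _ hb]
  linarith
end

section
/- Let (K, d) be a compact metric space, let ρ and σ be finite Borel measures on K, and let Ψ : ℝ → ℝ be continuous. Then, in the extended reals, the supremum over all bounded Borel measurable functions h : K → ℝ of ∫ h dρ − ∫ Ψ(h) dσ equals the supremum over all continuous functions h : K → ℝ of ∫ h dρ − ∫ Ψ(h) dσ. -/
/-!
Continuous functions are bounded Borel functions, so only `≤` needs an argument. Given a Borel
function `h` with values in `[-C, C]`, density of the continuous functions in `L¹(ρ + σ)` provides
continuous functions converging to `h` in `L¹`, hence, along a subsequence, almost everywhere for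
both `ρ` and `σ`. Clamping them to `[-C, C]` keeps continuity and the convergence, and makes them
and their compositions with `Ψ` uniformly bounded. By dominated convergence the values of the
functional at these continuous functions converge to its value at `h`. This `L¹` density replaces
the combination of the Lusin and Tietze theorems.
-/

open MeasureTheory

/-- A bounded Borel function is an almost everywhere limit of uniformly bounded continuous
functions. -/
theorem exists_continuous_bounded_tendsto_ae
    {K : Type*} [MetricSpace K] [MeasurableSpace K] [BorelSpace K]
    (μ : Measure K) [IsFiniteMeasure μ] {h : K → ℝ} (hm : Measurable h)
    {C : ℝ} (hC0 : 0 ≤ C) (hC : ∀ x, |h x| ≤ C) :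
    ∃ g : ℕ → K → ℝ, (∀ n, Continuous (g n)) ∧ (∀ n x, g n x ∈ Set.Icc (-C) C) ∧
      ∀ᵐ x ∂μ, Filter.Tendsto (fun n => g n x) Filter.atTop (nhds (h x)) := by
  have hmem : MemLp h 1 μ :=
    MemLp.of_bound hm.aestronglyMeasurable C (Filter.Eventually.of_forall hC)
  obtain ⟨ε, -, hεpos, hε⟩ := exists_seq_strictAnti_tendsto' (zero_lt_one (α := ENNReal))
  choose f hf _ using fun n =>
    hmem.exists_boundedContinuous_eLpNorm_sub_le ENNReal.one_ne_top (hεpos n).1.ne'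
  have hlim : Filter.Tendsto (fun n => eLpNorm ((f n : K → ℝ) - h) 1 μ) Filter.atTop (nhds 0) :=
    tendsto_of_tendsto_of_tendsto_of_le_of_le tendsto_const_nhds hε (fun _ => zero_le)
      fun n => by
        rw [eLpNorm_sub_comm]
        exact hf n
  have hmeas : TendstoInMeasure μ (fun n => (f n : K → ℝ)) Filter.atTop h :=
    tendstoInMeasure_of_tendsto_eLpNorm one_ne_zero
      (fun n => (f n).continuous.aestronglyMeasurable) hm.aestronglyMeasurable hlim
  obtain ⟨ns, -, hae⟩ := hmeas.exists_seq_tendsto_ae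
  refine ⟨fun n x => max (-C) (min C (f (ns n) x)), fun n => by fun_prop,
    fun n x => ⟨le_max_left _ _, max_le (by linarith) (min_le_left _ _)⟩, ?_⟩
  filter_upwards [hae] with x hx
  have hx' := (tendsto_const_nhds (x := -C)).max ((tendsto_const_nhds (x := C)).min hx)
  rwa [min_eq_right (abs_le.1 (hC x)).2, max_eq_right (abs_le.1 (hC x)).1] at hx'

/-- On a compact metric space, the divergence-type supremum
`sup_h ∫ h dρ - ∫ Ψ(h) dσ` is the same over bounded Borel test functions as over
continuous test functions (values in the extended reals). -/
theorem sup_boundedMeasurable_eq_sup_continuous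
    (K : Type*) [MetricSpace K] [CompactSpace K] [MeasurableSpace K] [BorelSpace K]
    (ρ σ : Measure K) [IsFiniteMeasure ρ] [IsFiniteMeasure σ]
    (Ψ : ℝ → ℝ) (hΨ : Continuous Ψ) :
    (⨆ h : {h : K → ℝ // Measurable h ∧ ∃ C, ∀ x, |h x| ≤ C},
        (((∫ x, h.1 x ∂ρ) - ∫ x, Ψ (h.1 x) ∂σ : ℝ) : EReal)) =
      ⨆ h : {h : K → ℝ // Continuous h},
        (((∫ x, h.1 x ∂ρ) - ∫ x, Ψ (h.1 x) ∂σ : ℝ) : EReal) := by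
  apply le_antisymm
  · refine iSup_le ?_
    rintro ⟨h, hm, C₀, hC₀⟩
    -- `C₀` may be negative when `K` is empty.
    have hC : ∀ x, |h x| ≤ |C₀| := fun x => (hC₀ x).trans (le_abs_self _)
    obtain ⟨g, hgc, hgb, hae⟩ :=
      exists_continuous_bounded_tendsto_ae (ρ + σ) hm (abs_nonneg C₀) hC
    rw [ae_add_measure_iff] at hae
    obtain ⟨M, hM⟩ := (isCompact_Icc (a := -|C₀|) (b := |C₀|)).exists_bound_of_continuousOn
      hΨ.continuousOn
    have h1 : Filter.Tendsto (fun n => ∫ x, g n x ∂ρ) Filter.atTop (nhds (∫ x, h x ∂ρ)) :=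
      tendsto_integral_of_dominated_convergence (fun _ => |C₀|)
        (fun n => (hgc n).aestronglyMeasurable) (integrable_const _)
        (fun n => Filter.Eventually.of_forall fun x => abs_le.2 (hgb n x)) hae.1
    have h2 : Filter.Tendsto (fun n => ∫ x, Ψ (g n x) ∂σ) Filter.atTop
        (nhds (∫ x, Ψ (h x) ∂σ)) :=
      tendsto_integral_of_dominated_convergence (fun _ => M)
        (fun n => (hΨ.comp (hgc n)).aestronglyMeasurable) (integrable_const _)
        (fun n => Filter.Eventually.of_forall fun x => hM _ (hgb n x))
        (hae.2.mono fun x hx => (hΨ.tendsto _).comp hx)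
    exact le_of_tendsto' ((continuous_coe_real_ereal.tendsto _).comp (h1.sub h2))
      fun n => le_iSup (fun h : {h : K → ℝ // Continuous h} =>
        (((∫ x, h.1 x ∂ρ) - ∫ x, Ψ (h.1 x) ∂σ : ℝ) : EReal)) ⟨g n, hgc n⟩
  · refine iSup_le ?_
    rintro ⟨h, hc⟩
    obtain ⟨C, hC⟩ := isCompact_univ.exists_bound_of_continuousOn hc.continuousOn
    exact le_iSup (fun h : {h : K → ℝ // Measurable h ∧ ∃ C, ∀ x, |h x| ≤ C} =>
      (((∫ x, h.1 x ∂ρ) - ∫ x, Ψ (h.1 x) ∂σ : ℝ) : EReal))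
      ⟨h, hc.measurable, C, fun x => hC x (Set.mem_univ x)⟩
end

section
/- Let K ⊆ ℝ^d be a nonempty compact set equal to the closure of its interior. Let ν and ν_m (m ∈ ℕ) be Borel probability measures on ℝ^d, all supported in K, with Lebesgue densities g and g_m respectively that vanish outside K. Assume: (a) the restriction of g to K is continuous and there is c > 0 with g(x) ≥ c for all x ∈ K; (b) the family {g_m restricted to K : m ∈ ℕ} is uniformly bounded and uniformly equicontinuous on K; (c) ν_m → ν weakly, i.e., ∫ φ dν_m → ∫ φ dν for every bounded continuous φ : ℝ^d → ℝ. Then sup_{x ∈ K} |g_m(x) − g(x)| → 0 as m → ∞; in particular each ν_m is absolutely continuous with respect to ν and the densities g_m/g converge to 1 uniformly on K. -/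
/-!
Write `h_m = g_m - g`. Since `g` is uniformly continuous on the compact set `K`, the family `h_m`
is uniformly equicontinuous on `K`. At an interior point `y` of `K`, testing the weak convergence
against a tent function supported in a small ball `B(y, r) ⊆ K` shows that a weighted average of
`h_m` over this ball tends to `0`; by equicontinuity the average is within `ε` of `h_m y`, so
`h_m y → 0` (`tendsto_at_interior`). As `interior K` is dense in the compact set `K`, finitely many
interior points are `δ`-dense in `K`, and equicontinuity upgrades pointwise to uniform convergence
(`uniform_of_dense`). This replaces the usual subsequence argument with Arzelà–Ascoli.
Absolute continuity holds because `g_m ≤ (M / c) g`, and the claim on the ratios follows from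
`|g_m / g - 1| ≤ |g_m - g| / c` on `K`.
-/

open MeasureTheory Filter
lemma integrable_of_continuousOn_of_zero {d : ℕ} {K : Set (EuclideanSpace ℝ (Fin d))}
    (hK : IsCompact K) {f : EuclideanSpace ℝ (Fin d) → ℝ} (hf : ContinuousOn f K)
    (hf0 : ∀ x ∉ K, f x = 0) : Integrable f volume := by
  have h := hf.integrableOn_compact (μ := volume) hK
  rwa [integrableOn_iff_integrable_of_support_subset] at h
  intro x hx
  by_contra hxK
  exact hx (hf0 x hxK)

lemma integral_withDensity_ofReal {d : ℕ} {f : EuclideanSpace ℝ (Fin d) → ℝ}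
    (hf : Integrable f volume) (hf0 : ∀ x, 0 ≤ f x) (φ : EuclideanSpace ℝ (Fin d) → ℝ) :
    ∫ x, φ x ∂(volume.withDensity fun x => ENNReal.ofReal (f x)) = ∫ x, f x * φ x := by
  rw [integral_withDensity_eq_integral_toReal_smul₀ hf.aemeasurable.ennreal_ofReal
    (ae_of_all _ fun x => ENNReal.ofReal_lt_top)]
  simp [ENNReal.toReal_ofReal, hf0]

/-- If every tent function centred at an interior point `y` has `h m`-integral tending to `0`, and
`h` is uniformly equicontinuous on `K`, then `h m y → 0`. -/
lemma tendsto_at_interior {d : ℕ} {K : Set (EuclideanSpace ℝ (Fin d))}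
    {h : ℕ → EuclideanSpace ℝ (Fin d) → ℝ} (hint : ∀ m, Integrable (h m) volume)
    (heq : ∀ ε > 0, ∃ δ > 0, ∀ m, ∀ x ∈ K, ∀ y ∈ K, dist x y < δ → |h m x - h m y| < ε)
    {y : EuclideanSpace ℝ (Fin d)} (hy : y ∈ interior K)
    (hweak : ∀ r > 0, Tendsto (fun m => ∫ x, h m x * max 0 (r - dist x y)) atTop (nhds 0)) :
    ∀ ε > 0, ∀ᶠ m in atTop, |h m y| < ε := by
  intro ε hε
  obtain ⟨δ, hδ, hδ'⟩ := heq (ε / 2) (by positivity)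
  obtain ⟨ρ, hρ, hρK⟩ := Metric.mem_nhds_iff.1 (mem_interior_iff_mem_nhds.1 hy)
  have hyK : y ∈ K := interior_subset hy
  set r := min δ ρ with hr
  have hr0 : 0 < r := lt_min hδ hρ
  set φ : EuclideanSpace ℝ (Fin d) → ℝ := fun x => max 0 (r - dist x y) with hφ
  have hφc : Continuous φ := by fun_prop
  have hφ0 : ∀ x, 0 ≤ φ x := fun x => le_max_left _ _
  have hφb : ∀ x, ‖φ x‖ ≤ r := fun x => by
    rw [Real.norm_of_nonneg (hφ0 x)]
    exact max_le hr0.le (by linarith [dist_nonneg (x := x) (y := y)])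
  have hφz : ∀ x, r ≤ dist x y → φ x = 0 := fun x hx => max_eq_left (by linarith)
  have hφs : HasCompactSupport φ := by
    refine HasCompactSupport.intro (isCompact_closedBall y r) fun x hx => hφz x ?_
    simp only [Metric.mem_closedBall, not_le] at hx
    exact hx.le
  have hφi : Integrable φ volume := hφc.integrable_of_hasCompactSupport hφs
  have hφpos : 0 < ∫ x, φ x :=
    hφc.integral_pos_of_hasCompactSupport_nonneg_nonzero hφs hφ0 (x := y)
      (by simp [hφ, hr0.le, hr0.ne'])
  have hprod : ∀ m, Integrable (fun x => h m x * φ x) volume := fun m =>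
    (hint m).mul_bdd (c := r) hφc.aestronglyMeasurable (ae_of_all _ hφb)
  have hclose : ∀ m, |(∫ x, h m x * φ x) - h m y * ∫ x, φ x| ≤ ε / 2 * ∫ x, φ x := by
    intro m
    rw [← integral_const_mul, ← integral_sub (hprod m) (hφi.const_mul _), ← integral_const_mul,
      ← Real.norm_eq_abs]
    refine norm_integral_le_of_norm_le (hφi.const_mul _) (ae_of_all _ fun x => ?_)
    rw [← sub_mul, norm_mul, Real.norm_of_nonneg (hφ0 x), Real.norm_eq_abs]
    rcases lt_or_ge (dist x y) r with hx | hx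
    · exact mul_le_mul_of_nonneg_right (hδ' m x (hρK (hx.trans_le (min_le_right _ _))) y hyK
        (hx.trans_le (min_le_left _ _))).le (hφ0 x)
    · simp [hφz x hx]
  have hev := (hweak r hr0).eventually
    (Metric.ball_mem_nhds 0 (show 0 < ε / 2 * ∫ x, φ x by positivity))
  filter_upwards [hev] with m hm
  rw [Real.dist_eq, sub_zero] at hm
  have h1 : |h m y| * ∫ x, φ x < ε * ∫ x, φ x := by
    have h2 := hclose m
    rw [← abs_of_pos hφpos, ← abs_mul, abs_of_pos hφpos]
    rw [abs_le] at h2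
    rw [abs_lt] at hm ⊢
    constructor <;> linarith [h2.1, h2.2, hm.1, hm.2]
  exact lt_of_mul_lt_mul_right h1 hφpos.le

/-- Pointwise convergence to `0` on a dense subset of a compact set is uniform for a uniformly
equicontinuous sequence. -/
lemma uniform_of_dense {X : Type*} [PseudoMetricSpace X] {K S : Set X} (hK : IsCompact K)
    (hSK : S ⊆ K) (hKS : K ⊆ closure S) {h : ℕ → X → ℝ}
    (heq : ∀ ε > 0, ∃ δ > 0, ∀ m, ∀ x ∈ K, ∀ y ∈ K, dist x y < δ → |h m x - h m y| < ε)
    (hpt : ∀ y ∈ S, ∀ ε > 0, ∀ᶠ m in atTop, |h m y| < ε) :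
    ∀ ε > 0, ∀ᶠ m in atTop, ∀ x ∈ K, |h m x| < ε := by
  intro ε hε
  obtain ⟨δ, hδ, hδ'⟩ := heq (ε / 2) (by positivity)
  obtain ⟨t, htS, htf, hcov⟩ := hK.elim_finite_subcover_image (b := S)
    (c := fun y => Metric.ball y δ) (fun y _ => Metric.isOpen_ball) (fun x hx => by
      obtain ⟨y, hy, hxy⟩ := Metric.mem_closure_iff.1 (hKS hx) δ hδ
      exact Set.mem_biUnion hy hxy)
  have hev : ∀ᶠ m in atTop, ∀ y ∈ t, |h m y| < ε / 2 :=
    (eventually_all_finite htf).2 fun y hy => hpt y (htS hy) _ (by positivity)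
  filter_upwards [hev] with m hm x hx
  obtain ⟨y, hyt, hxy⟩ := Set.mem_iUnion₂.1 (hcov hx)
  have h1 := hδ' m x hx y (hSK (htS hyt)) hxy
  have h2 := hm y hyt
  rw [abs_lt] at *
  constructor <;> linarith [h1.1, h1.2, h2.1, h2.2]

lemma tendsto_iSup_abs {X : Type*} {K : Set X} (hK : K.Nonempty) {h : ℕ → X → ℝ}
    (hu : ∀ ε > 0, ∀ᶠ m in atTop, ∀ x ∈ K, |h m x| < ε) :
    Tendsto (fun m => ⨆ x : K, |h m x.1|) atTop (nhds 0) := by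
  have : Nonempty K := hK.to_subtype
  rw [Metric.tendsto_nhds]
  intro ε hε
  filter_upwards [hu (ε / 2) (by positivity)] with m hm
  rw [Real.dist_eq, sub_zero, abs_of_nonneg (Real.iSup_nonneg fun x => abs_nonneg _)]
  exact (ciSup_le fun x : K => (hm x.1 x.2).le).trans_lt (by linarith)

/-- Remark 3.2(i) of the paper (a converse to Scheffé's theorem): if the limiting density
`g` is continuous and bounded away from zero on the compact set `K` (which is the closure
of its interior), the densities `g_m` are uniformly bounded and uniformly equicontinuous
on `K`, and `ν_m → ν` weakly, then `g_m → g` uniformly on `K`; in particular `ν_m ≪ ν`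
and the density ratios `g_m/g` converge to `1` uniformly on `K`. -/
theorem densities_tendsto_uniformly_of_weak_convergence
    (d : ℕ) (K : Set (EuclideanSpace ℝ (Fin d))) (hKne : K.Nonempty)
    (hKcomp : IsCompact K) (hKreg : K = closure (interior K))
    (g : EuclideanSpace ℝ (Fin d) → ℝ) (gm : ℕ → EuclideanSpace ℝ (Fin d) → ℝ)
    (hg_nonneg : ∀ x, 0 ≤ g x) (hgm_nonneg : ∀ m x, 0 ≤ gm m x)
    (hg_zero : ∀ x ∉ K, g x = 0) (hgm_zero : ∀ m, ∀ x ∉ K, gm m x = 0)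
    (ν : Measure (EuclideanSpace ℝ (Fin d))) [IsProbabilityMeasure ν]
    (νm : ℕ → Measure (EuclideanSpace ℝ (Fin d))) [∀ m, IsProbabilityMeasure (νm m)]
    (hν_dens : ν = volume.withDensity fun x => ENNReal.ofReal (g x))
    (hνm_dens : ∀ m, νm m = volume.withDensity fun x => ENNReal.ofReal (gm m x))
    (hg_cont : ContinuousOn g K)
    (hg_pos : ∃ c > 0, ∀ x ∈ K, c ≤ g x)
    (hgm_bdd : ∃ M, ∀ m, ∀ x ∈ K, |gm m x| ≤ M)
    (hgm_equicont : ∀ ε > 0, ∃ δ > 0, ∀ m, ∀ x ∈ K, ∀ y ∈ K,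
      dist x y < δ → |gm m x - gm m y| < ε)
    (hweak : ∀ φ : EuclideanSpace ℝ (Fin d) → ℝ, Continuous φ → (∃ C, ∀ x, |φ x| ≤ C) →
      Tendsto (fun m => ∫ x, φ x ∂(νm m)) atTop (nhds (∫ x, φ x ∂ν))) :
    Tendsto (fun m => ⨆ x : K, |gm m x.1 - g x.1|) atTop (nhds 0) ∧
      (∀ m, νm m ≪ ν) ∧
      Tendsto (fun m => ⨆ x : K, |gm m x.1 / g x.1 - 1|) atTop (nhds 0) := by
  have hgi := integrable_of_continuousOn_of_zero hKcomp hg_cont hg_zero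
  have hgmi : ∀ m, Integrable (gm m) volume := fun m => by
    refine integrable_of_continuousOn_of_zero hKcomp ?_ (hgm_zero m)
    rw [Metric.continuousOn_iff]
    intro x hx ε hε
    obtain ⟨δ, hδ, h⟩ := hgm_equicont ε hε
    exact ⟨δ, hδ, fun y hy hyx => h m y hy x hx hyx⟩
  have heq : ∀ ε > 0, ∃ δ > 0, ∀ m, ∀ x ∈ K, ∀ y ∈ K, dist x y < δ →
      |(gm m x - g x) - (gm m y - g y)| < ε := by
    intro ε hε
    obtain ⟨δ₁, hδ₁, h₁⟩ := hgm_equicont (ε / 2) (by positivity)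
    obtain ⟨δ₂, hδ₂, h₂⟩ := Metric.uniformContinuousOn_iff.1
      (hKcomp.uniformContinuousOn_of_continuous hg_cont) (ε / 2) (by positivity)
    refine ⟨min δ₁ δ₂, lt_min hδ₁ hδ₂, fun m x hx y hy hxy => ?_⟩
    have h1 := h₁ m x hx y hy (hxy.trans_le (min_le_left _ _))
    have h2 := h₂ x hx y hy (hxy.trans_le (min_le_right _ _))
    rw [Real.dist_eq] at h2
    rw [abs_lt] at *
    constructor <;> linarith [h1.1, h1.2, h2.1, h2.2]
  have hunif : ∀ ε > 0, ∀ᶠ m in atTop, ∀ x ∈ K, |gm m x - g x| < ε := by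
    refine uniform_of_dense (h := fun m x => gm m x - g x) hKcomp interior_subset hKreg.le heq ?_
    intro y hy
    refine tendsto_at_interior (h := fun m x => gm m x - g x)
      (fun m => (hgmi m).sub hgi) heq hy fun r hr => ?_
    have hφc : Continuous fun x : EuclideanSpace ℝ (Fin d) => max 0 (r - dist x y) := by fun_prop
    have hφb : ∀ x : EuclideanSpace ℝ (Fin d), |max 0 (r - dist x y)| ≤ r := fun x => by
      rw [abs_of_nonneg (le_max_left _ _)]
      exact max_le hr.le (by linarith [dist_nonneg (x := x) (y := y)])
    have hprod : ∀ f : EuclideanSpace ℝ (Fin d) → ℝ, Integrable f volume →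
        Integrable (fun x => f x * max 0 (r - dist x y)) volume := fun f hf =>
      hf.mul_bdd (c := r) hφc.aestronglyMeasurable (ae_of_all _ hφb)
    have hw := (hweak _ hφc ⟨r, hφb⟩).sub_const
      (∫ x, max 0 (r - dist x y) ∂ν)
    rw [sub_self] at hw
    refine hw.congr fun m => ?_
    rw [hνm_dens m, hν_dens, integral_withDensity_ofReal (hgmi m) (hgm_nonneg m),
      integral_withDensity_ofReal hgi hg_nonneg, ← integral_sub (hprod _ (hgmi m)) (hprod _ hgi)]
    simp only [sub_mul]
  obtain ⟨c, hc, hgc⟩ := hg_pos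
  obtain ⟨M, hM⟩ := hgm_bdd
  refine ⟨tendsto_iSup_abs hKne hunif, fun m => ?_, ?_⟩
  · have hle : νm m ≤ ENNReal.ofReal (M / c) • ν := by
      rw [hνm_dens m, hν_dens, ← withDensity_smul' _ _ ENNReal.ofReal_ne_top]
      refine withDensity_mono (ae_of_all _ fun x => ?_)
      simp only [Pi.smul_apply, smul_eq_mul]
      by_cases hx : x ∈ K
      · have hMx : gm m x ≤ M := (le_abs_self _).trans (hM m x hx)
        have hM0 : 0 ≤ M / c := div_nonneg ((hgm_nonneg m x).trans hMx) hc.le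
        rw [← ENNReal.ofReal_mul hM0]
        refine ENNReal.ofReal_le_ofReal (hMx.trans ?_)
        calc M = M / c * c := by field_simp
          _ ≤ M / c * g x := mul_le_mul_of_nonneg_left (hgc x hx) hM0
      · simp [hgm_zero m x hx]
    exact (Measure.absolutelyContinuous_of_le hle).trans Measure.smul_absolutelyContinuous
  · refine tendsto_iSup_abs (h := fun m x => gm m x / g x - 1) hKne fun ε hε => ?_
    filter_upwards [hunif (ε * c) (by positivity)] with m hm x hx
    have hgx : 0 < g x := hc.trans_le (hgc x hx)
    rw [div_sub_one hgx.ne', abs_div, abs_of_pos hgx, div_lt_iff₀ hgx]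
    exact (hm x hx).trans_le (mul_le_mul_of_nonneg_left (hgc x hx) hε.le)
end
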